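/- Let D be a rich, anonymous, tree-single-peaked domain for a marriage market with n ≥ 3 men and n women. There exists a stable and strategy-proof matching rule on D if and only if the men's common preference set or the women's common preference set (or both) satisfies the top dominance property. -/

import Mathlib

/-- `r` is a (strict) preference, i.e., a strict total order. -/
def IsPref {X : Type*} (r : X → X → Prop) : Prop := IsStrictTotalOrder X r

/-- `x` is the top (most preferred) element of `r`. -/
def TopOf {X : Type*} (r : X → X → Prop) (x : X) : Prop := ∀ y, y ≠ x → r x y

/-- `a` lies on the (unique) path from `x` to `y` in `G`. -/
def OnPath {X : Type*} (G : SimpleGraph X) (a x y : X) : Prop :=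
  ∀ p : G.Walk x y, p.IsPath → a ∈ p.support

/-- Single-peakedness with respect to a tree `G`. -/
def SPTree {X : Type*} (G : SimpleGraph X) (r : X → X → Prop) : Prop :=
  ∀ t a b, TopOf r t → OnPath G a t b → a = b ∨ r a b

/-- Classical single-peakedness with respect to a strict linear order `lt`. -/
def SPLine {X : Type*} (lt r : X → X → Prop) : Prop :=
  ∀ t x y, TopOf r t → (((x = t ∨ lt t x) ∧ lt x y) ∨ (lt y x ∧ (x = t ∨ lt x t))) → r x y

/-- Richness: every alternative is the top of some admissible preference. -/
def Rich {X : Type*} (D : Set (X → X → Prop)) : Prop := ∀ x, ∃ P ∈ D, TopOf P x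

/-- Top dominance property. -/
def TD {X : Type*} (D : Set (X → X → Prop)) : Prop :=
  ∀ x y z : X, (∃ P ∈ D, P x y ∧ P y z) → ¬ ∃ P ∈ D, P x z ∧ P z y

/-- Rotation property. -/
def Rotation {X : Type*} (D : Set (X → X → Prop)) : Prop :=
  ∀ x y z t : X, (∃ P ∈ D, P x y ∧ P y z ∧ P z t) → ¬ ∃ P ∈ D, P z x ∧ P x t

/-- `G` is a path graph (linear tree) on `k` vertices. -/
def IsPathG {X : Type*} (G : SimpleGraph X) (k : ℕ) : Prop :=
  ∃ e : X ≃ Fin k, ∀ a b, G.Adj a b ↔ ((e a : ℕ) + 1 = e b ∨ (e b : ℕ) + 1 = e a)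

/-- `G` is a star graph: some center adjacent to all other vertices, no other edges. -/
def IsStarG {X : Type*} (G : SimpleGraph X) : Prop :=
  ∃ c, ∀ a b, G.Adj a b ↔ a ≠ b ∧ (a = c ∨ b = c)

/-- A preference relation over the `n` agents of the opposite side. -/
abbrev PrefRel (n : ℕ) := Fin n → Fin n → Prop

/-- A preference profile: one preference (over women) per man, one (over men) per woman. -/
abbrev Profile (n : ℕ) := (Fin n → PrefRel n) × (Fin n → PrefRel n)

/-- Membership in the anonymous product domain with men's set `Dm` and women's set `Dw`. -/
def InDomain {n : ℕ} (Dm Dw : Set (PrefRel n)) (p : Profile n) : Prop :=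
  (∀ m, p.1 m ∈ Dm) ∧ (∀ w, p.2 w ∈ Dw)

/-- Pair `(m, w)` blocks matching `μ` at profile `p`. -/
def Blocks {n : ℕ} (p : Profile n) (μ : Fin n ≃ Fin n) (m w : Fin n) : Prop :=
  p.1 m w (μ m) ∧ p.2 w m (μ.symm w)

/-- Matching `μ` is stable at profile `p`. -/
def StableAt {n : ℕ} (p : Profile n) (μ : Fin n ≃ Fin n) : Prop := ∀ m w, ¬ Blocks p μ m w

/-- The matching rule `φ` is stable on the domain. -/
def StableRule {n : ℕ} (Dm Dw : Set (PrefRel n)) (φ : Profile n → (Fin n ≃ Fin n)) : Prop :=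
  ∀ p, InDomain Dm Dw p → StableAt p (φ p)

/-- Strategy-proofness on the domain: no unilateral in-domain misreport gives a strictly
better match. -/
def SP {n : ℕ} (Dm Dw : Set (PrefRel n)) (φ : Profile n → (Fin n ≃ Fin n)) : Prop :=
  ∀ p, InDomain Dm Dw p →
    (∀ m P', P' ∈ Dm → ¬ p.1 m (φ (Function.update p.1 m P', p.2) m) (φ p m)) ∧
    (∀ w P', P' ∈ Dw → ¬ p.2 w ((φ (p.1, Function.update p.2 w P')).symm w) ((φ p).symm w))

/-- Non-bossiness: a unilateral report change leaving one's own match unchanged leaves the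
whole matching unchanged. -/
def NonBossy {n : ℕ} (Dm Dw : Set (PrefRel n)) (φ : Profile n → (Fin n ≃ Fin n)) : Prop :=
  ∀ p, InDomain Dm Dw p →
    (∀ m P', P' ∈ Dm → φ (Function.update p.1 m P', p.2) m = φ p m →
       φ (Function.update p.1 m P', p.2) = φ p) ∧
    (∀ w P', P' ∈ Dw → (φ (p.1, Function.update p.2 w P')).symm w = (φ p).symm w →
       φ (p.1, Function.update p.2 w P') = φ p)

/-- Man `m` is weakly better off under `μ'` than under `μ` (true preferences from `p`). -/
def MWeakBetter {n : ℕ} (p : Profile n) (μ μ' : Fin n ≃ Fin n) (m : Fin n) : Prop :=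
  μ' m = μ m ∨ p.1 m (μ' m) (μ m)

/-- Woman `w` is weakly better off under `μ'` than under `μ`. -/
def WWeakBetter {n : ℕ} (p : Profile n) (μ μ' : Fin n ≃ Fin n) (w : Fin n) : Prop :=
  μ'.symm w = μ.symm w ∨ p.2 w (μ'.symm w) (μ.symm w)

/-- Group strategy-proofness on the domain. -/
def GSP {n : ℕ} (Dm Dw : Set (PrefRel n)) (φ : Profile n → (Fin n ≃ Fin n)) : Prop :=
  ∀ p, InDomain Dm Dw p →
    ¬ ∃ (p' : Profile n) (S : Set (Fin n ⊕ Fin n)),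
      InDomain Dm Dw p' ∧
      (∀ m, Sum.inl m ∉ S → p'.1 m = p.1 m) ∧
      (∀ w, Sum.inr w ∉ S → p'.2 w = p.2 w) ∧
      (∀ m, Sum.inl m ∈ S → MWeakBetter p (φ p) (φ p') m) ∧
      (∀ w, Sum.inr w ∈ S → WWeakBetter p (φ p) (φ p') w) ∧
      ((∃ m, Sum.inl m ∈ S ∧ p.1 m (φ p' m) (φ p m)) ∨
       (∃ w, Sum.inr w ∈ S ∧ p.2 w ((φ p').symm w) ((φ p).symm w)))

/-!
Sufficiency. Suppose the women's preferences satisfy top dominance and take the men-optimal stable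
rule. Deferred acceptance is treated as a descent on *proposal states*: maps `f` sending each man to
the woman he currently proposes to, such that every woman a man has already passed over holds a
proposal she likes better. An injective state is a stable matching, and a non-injective one can be
advanced by letting a rejected man move on to his next choice; instead of following a run of the
algorithm, each argument looks at a state from which no advance keeps a given property.
If a matching gives some men more than the men-optimal one does, such a last state produces a
blocking pair whose man does not gain (the blocking lemma of Gale and Sotomayor), so no man can
manipulate. If a woman gains by misreporting, then at a last state common to the true and the
reported profile she alone ranks two proposers differently, while preferring her new partner to both
in both reports, which contradicts top dominance.

Necessity. If top dominance fails at `x, y, z`, the median `v` of these three alternatives in the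
tree yields admissible orders in which `v, y, z` are ranked `v y z`, `v z y` and `y v z`. When this
happens on both sides, richness lets all other agents be matched in mutually top pairs, so the rule
restricts to a three-by-three market, where a profile with two stable matchings is manipulable
by a man or by a woman, whichever matching is chosen.
-/

namespace IsPref

variable {X : Type*} {r : X → X → Prop} {a b c : X}

lemma irrefl (hr : IsPref r) (a : X) : ¬ r a a :=
  have : IsStrictTotalOrder X r := hr
  irrefl_of r a

lemma ne (hr : IsPref r) (hab : r a b) : a ≠ b := by
  rintro rfl
  exact hr.irrefl a hab

lemma trans (hr : IsPref r) (hab : r a b) (hbc : r b c) : r a c :=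
  have : IsStrictTotalOrder X r := hr
  trans_of r hab hbc

lemma asymm (hr : IsPref r) (hab : r a b) : ¬ r b a :=
  fun hba => hr.irrefl a (hr.trans hab hba)

lemma of_not_of_ne (hr : IsPref r) (hba : ¬ r b a) (hne : a ≠ b) : r a b :=
  have : IsStrictTotalOrder X r := hr
  ((trichotomous_of r a b).resolve_right (not_or_intro hne hba))

lemma trans_of_not_left (hr : IsPref r) (hba : ¬ r b a) (hbc : r b c) : r a c :=
  have : IsStrictTotalOrder X r := hr
  trans_trichotomous_left hba hbc

lemma trans_of_not_right (hr : IsPref r) (hab : r a b) (hcb : ¬ r c b) : r a c :=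
  have : IsStrictTotalOrder X r := hr
  trans_trichotomous_right hab hcb

lemma wellFounded [Finite X] (hr : IsPref r) : WellFounded r :=
  have : IsStrictTotalOrder X r := hr
  Finite.wellFounded_of_trans_of_irrefl r

lemma wellFounded_swap [Finite X] (hr : IsPref r) : WellFounded (Function.swap r) :=
  have : IsStrictTotalOrder X r := hr
  Finite.wellFounded_of_trans_of_irrefl (Function.swap r)

lemma exists_topOf [Finite X] [Nonempty X] (hr : IsPref r) : ∃ t, TopOf r t := by
  obtain ⟨t, -, ht⟩ := hr.wellFounded.has_min Set.univ Set.univ_nonempty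
  exact ⟨t, fun y hy => hr.of_not_of_ne (ht y trivial) hy.symm⟩

end IsPref

/-- In the order `r`, the alternative `b` comes immediately after `a`. -/
def IsNext {X : Type*} (r : X → X → Prop) (a b : X) : Prop :=
  r a b ∧ ∀ c, r a c → ¬ r c b

lemma IsPref.exists_isNext {X : Type*} [Finite X] {r : X → X → Prop} (hr : IsPref r) {a b : X}
    (hab : r a b) : ∃ c, IsNext r a c :=
  hr.wellFounded.has_min {c | r a c} ⟨b, hab⟩

/-! ### Proposal states -/

section ProposalStates

variable {n : ℕ} {p : Profile n} {f f' : Fin n → Fin n} {g : Fin n ≃ Fin n}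

/-- A proposal state of deferred acceptance: man `m` proposes to `f m`, and every woman he prefers
to `f m` has a proposer whom she prefers to him. -/
def IsProposalState (p : Profile n) (f : Fin n → Fin n) : Prop :=
  ∀ m w, p.1 m w (f m) → ∃ m', f m' = w ∧ p.2 w m' m

/-- Every man finds `f` at least as good as `g`. Weak preference is encoded as the negation of the
opposite strict preference. -/
def MenWeaklyPrefer (p : Profile n) (f g : Fin n → Fin n) : Prop :=
  ∀ m, ¬ p.1 m (g m) (f m)

/-- One step of deferred acceptance: some woman prefers `m'` among her two proposers `m'` and `m`,
and the rejected man `m` moves on to the next woman on his list. -/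
def Advance (p : Profile n) (f f' : Fin n → Fin n) : Prop :=
  ∃ m' m w, f m' = f m ∧ p.2 (f m) m' m ∧ IsNext (p.1 m) (f m) w ∧ f' = Function.update f m w

lemma exists_forall_isProposalState (hM : ∀ m, IsPref (p.1 m)) :
    ∃ f, IsProposalState p f ∧ ∀ g, MenWeaklyPrefer p f g := by
  have hne : Fin n → Nonempty (Fin n) := fun m => ⟨m⟩
  choose f hf using fun m => have := hne m; (hM m).exists_topOf
  have not_better : ∀ m w, ¬ p.1 m w (f m) := by
    intro m w hw
    exact (hM m).asymm hw (hf m w ((hM m).ne hw))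
  exact ⟨f, fun m w hw => (not_better m w hw).elim, fun g m => not_better m (g m)⟩

lemma exists_last_state (hM : ∀ m, IsPref (p.1 m)) {C : (Fin n → Fin n) → Prop}
    (hC : ∃ f, C f) : ∃ f, C f ∧ ∀ f', Advance p f f' → ¬ C f' := by
  have wf := Pi.Lex.wellFounded (· < ·) fun m => (hM m).wellFounded_swap
  obtain ⟨f, hf, hlast⟩ := wf.has_min {f | C f} hC
  refine ⟨f, hf, ?_⟩
  rintro _ ⟨-, m, w, -, -, hw, rfl⟩ hCw
  refine hlast _ hCw ⟨m, fun m' hm' => Function.update_of_ne hm'.ne _ _, ?_⟩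
  simpa [Function.swap] using hw.1

lemma IsProposalState.advance (hM : ∀ m, IsPref (p.1 m)) (hW : ∀ w, IsPref (p.2 w))
    (hf : IsProposalState p f) (hadv : Advance p f f') : IsProposalState p f' := by
  obtain ⟨m₁, m₂, w', heq, hrej, hnext, rfl⟩ := hadv
  have hne : m₁ ≠ m₂ := (hW _).ne hrej
  have hm₁ : Function.update f m₂ w' m₁ = f m₂ := by rw [Function.update_of_ne hne, heq]
  have persists : ∀ m w, (∃ m', f m' = w ∧ p.2 w m' m) →
      ∃ m', Function.update f m₂ w' m' = w ∧ p.2 w m' m := by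
    rintro m _ ⟨m', rfl, hm'⟩
    rcases eq_or_ne m' m₂ with rfl | hm
    · exact ⟨m₁, hm₁, (hW _).trans hrej hm'⟩
    · exact ⟨m', Function.update_of_ne hm _ _, hm'⟩
  intro m w hw
  rcases eq_or_ne m m₂ with rfl | hm
  · rw [Function.update_self] at hw
    rcases eq_or_ne w (f m) with rfl | hwf
    · exact ⟨m₁, hm₁, hrej⟩
    · have not_between : ¬ p.1 m (f m) w := fun h => hnext.2 w h hw
      exact persists m w (hf m w ((hM m).of_not_of_ne not_between hwf))
  · rw [Function.update_of_ne hm] at hw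
    exact persists m w (hf m w hw)

lemma StableAt.not_prefers_proposer (hM : ∀ m, IsPref (p.1 m)) (hW : ∀ w, IsPref (p.2 w))
    (hg : StableAt p g) (hfg : MenWeaklyPrefer p f g) (m : Fin n) :
    ¬ p.2 (f m) m (g.symm (f m)) := by
  intro h
  have hne : f m ≠ g m := by
    intro heq
    rw [heq, Equiv.symm_apply_apply] at h
    exact (hW _).irrefl _ h
  exact hg m (f m) ⟨(hM m).of_not_of_ne (hfg m) hne, h⟩

lemma MenWeaklyPrefer.advance (hM : ∀ m, IsPref (p.1 m)) (hW : ∀ w, IsPref (p.2 w))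
    (hg : StableAt p g) (hfg : MenWeaklyPrefer p f g) (hadv : Advance p f f') :
    MenWeaklyPrefer p f' g := by
  obtain ⟨m₁, m₂, w', heq, hrej, hnext, rfl⟩ := hadv
  intro m
  rcases eq_or_ne m m₂ with rfl | hm
  · have hne : f m ≠ g m := by
      intro hfm
      apply hg.not_prefers_proposer hM hW hfg m₁
      rwa [heq, hfm, Equiv.symm_apply_apply, ← hfm]
    rw [Function.update_self]
    exact hnext.2 _ ((hM m).of_not_of_ne (hfg m) hne)
  · rw [Function.update_of_ne hm]
    exact hfg m

lemma IsProposalState.exists_next (hM : ∀ m, IsPref (p.1 m)) (hf : IsProposalState p f)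
    (hinj : ¬ Function.Injective f) (m : Fin n) : ∃ w, IsNext (p.1 m) (f m) w := by
  obtain ⟨w, hw⟩ : ∃ w, ∀ m, f m ≠ w := by
    simpa [Finite.injective_iff_surjective, Function.Surjective] using hinj
  have hmw : ¬ p.1 m w (f m) := by
    intro h
    obtain ⟨m', hm', -⟩ := hf m w h
    exact hw m' hm'
  exact (hM m).exists_isNext ((hM m).of_not_of_ne hmw (hw m))

lemma IsProposalState.exists_advance (hM : ∀ m, IsPref (p.1 m)) (hW : ∀ w, IsPref (p.2 w))
    (hf : IsProposalState p f) (hinj : ¬ Function.Injective f) : ∃ f', Advance p f f' := by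
  obtain ⟨m, m', heq, hne⟩ : ∃ m m', f m = f m' ∧ m ≠ m' := by
    simpa [Function.Injective] using hinj
  by_cases hrej : p.2 (f m') m m'
  · obtain ⟨w, hw⟩ := hf.exists_next hM hinj m'
    exact ⟨_, m, m', w, heq, hrej, hw, rfl⟩
  · obtain ⟨w, hw⟩ := hf.exists_next hM hinj m
    exact ⟨_, m', m, w, heq.symm, heq ▸ (hW _).of_not_of_ne hrej hne.symm, hw, rfl⟩

lemma IsProposalState.stableAt (hW : ∀ w, IsPref (p.2 w)) (hg : IsProposalState p g) :
    StableAt p g := by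
  rintro m w ⟨hmw, hwm⟩
  obtain ⟨m', rfl, hm'⟩ := hg m w hmw
  rw [Equiv.symm_apply_apply] at hwm
  exact (hW _).asymm hm' hwm

end ProposalStates

/-! ### The men-optimal stable matching -/

section MenOptimal

variable {n : ℕ} {p : Profile n} {f : Fin n → Fin n} {g g' μ : Fin n ≃ Fin n}

/-- `g` is the men-optimal stable matching: every man weakly prefers it to any stable matching. -/
def IsMenOptimal (p : Profile n) (g : Fin n ≃ Fin n) : Prop :=
  StableAt p g ∧ ∀ g', StableAt p g' → MenWeaklyPrefer p g g'

lemma exists_isMenOptimal (hM : ∀ m, IsPref (p.1 m)) (hW : ∀ w, IsPref (p.2 w)) :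
    ∃ g, IsMenOptimal p g := by
  obtain ⟨f₀, hf₀, htop⟩ := exists_forall_isProposalState hM
  obtain ⟨f, ⟨hf, habove⟩, hlast⟩ := exists_last_state hM
    (C := fun f => IsProposalState p f ∧
      ∀ g : Fin n ≃ Fin n, StableAt p g → MenWeaklyPrefer p f g)
    ⟨f₀, hf₀, fun g _ => htop g⟩
  have hinj : Function.Injective f := by
    by_contra hinj
    obtain ⟨f', hadv⟩ := hf.exists_advance hM hW hinj
    exact hlast f' hadv
      ⟨hf.advance hM hW hadv, fun g hg => (habove g hg).advance hM hW hg hadv⟩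
  lift f to Fin n ≃ Fin n using hinj.bijective_of_finite
  exact ⟨f, hf.stableAt hW, habove⟩

lemma IsMenOptimal.eq_of_injective (hM : ∀ m, IsPref (p.1 m)) (hW : ∀ w, IsPref (p.2 w))
    (hg : IsMenOptimal p g) (hf : IsProposalState p f) (hfg : MenWeaklyPrefer p f g)
    (hinj : Function.Injective f) : f = g := by
  lift f to Fin n ≃ Fin n using hinj.bijective_of_finite
  funext m
  by_contra hne
  exact hg.2 f (hf.stableAt hW) m ((hM m).of_not_of_ne (hfg m) hne)

lemma StableAt.blocks_of_gains (hM : ∀ m, IsPref (p.1 m)) (hW : ∀ w, IsPref (p.2 w))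
    (hg : StableAt p g) {m : Fin n} (hm : p.1 m (μ m) (g m))
    (hm' : ¬ p.1 (g.symm (μ m)) (μ (g.symm (μ m))) (μ m)) :
    Blocks p μ (g.symm (μ m)) (μ m) := by
  have hne : g.symm (μ m) ≠ m := by
    rw [Ne, Equiv.symm_apply_eq]
    exact (hM m).ne hm
  refine ⟨(hM _).of_not_of_ne hm' fun h => hne (μ.injective h.symm), ?_⟩
  rw [Equiv.symm_apply_apply]
  exact (hW _).of_not_of_ne (fun h => hg m (μ m) ⟨hm, h⟩) hne

/-- The state just before the last member of `S` reaches his men-optimal partner. -/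
lemma IsMenOptimal.exists_last_arrival (hM : ∀ m, IsPref (p.1 m)) (hW : ∀ w, IsPref (p.2 w))
    (hg : IsMenOptimal p g) {S : Set (Fin n)} (hS : ∃ m ∈ S, ∃ w, p.1 m w (g m)) :
    ∃ f, IsProposalState p f ∧ MenWeaklyPrefer p f g ∧
      ∃ m₀ ∈ S, f m₀ ≠ g m₀ ∧ ∀ m ∈ S, m ≠ m₀ → f m = g m := by
  obtain ⟨f₀, hf₀, htop⟩ := exists_forall_isProposalState hM
  obtain ⟨m₁, hm₁, w₁, hw₁⟩ := hS
  have hne : f₀ m₁ ≠ g m₁ := fun h => htop (fun _ => w₁) m₁ (h ▸ hw₁)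
  obtain ⟨f, ⟨hf, hfg, m₀, hm₀, hfm₀⟩, hlast⟩ := exists_last_state hM
    (C := fun f => IsProposalState p f ∧ MenWeaklyPrefer p f g ∧ ∃ m ∈ S, f m ≠ g m)
    ⟨f₀, hf₀, htop g, m₁, hm₁, hne⟩
  have hinj : ¬ Function.Injective f := fun hinj =>
    hfm₀ (congrFun (hg.eq_of_injective hM hW hf hfg hinj) m₀)
  obtain ⟨f', hadv⟩ := hf.exists_advance hM hW hinj
  have arrived : ∀ m ∈ S, f' m = g m := by
    intro m hm
    by_contra hne
    exact hlast f' hadv ⟨hf.advance hM hW hadv, hfg.advance hM hW hg.1 hadv, m, hm, hne⟩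
  obtain ⟨-, m₂, w, -, -, -, rfl⟩ := hadv
  have settled : ∀ m ∈ S, m ≠ m₂ → f m = g m := fun m hm hne => by
    simpa [Function.update_of_ne hne] using arrived m hm
  obtain rfl : m₀ = m₂ := by
    by_contra hne
    exact hfm₀ (settled m₀ hm₀ hne)
  exact ⟨f, hf, hfg, m₀, hm₀, hfm₀, settled⟩

/-- The main case of the blocking lemma. The last gainer to reach his men-optimal partner `w`
displaces there a proposer who does not gain and who blocks `μ` with `w`. -/
lemma IsMenOptimal.exists_blocks_of_forall_gains (hM : ∀ m, IsPref (p.1 m))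
    (hW : ∀ w, IsPref (p.2 w)) (hg : IsMenOptimal p g) (hne : ∃ m, p.1 m (μ m) (g m))
    (hclosed : ∀ m, p.1 m (μ m) (g m) → p.1 (g.symm (μ m)) (μ (g.symm (μ m))) (μ m)) :
    ∃ m w, ¬ p.1 m (μ m) (g m) ∧ Blocks p μ m w := by
  let S : Set (Fin n) := {m | p.1 m (μ m) (g m)}
  obtain ⟨m₁, hm₁⟩ := hne
  obtain ⟨f, hf, hfg, m₀, hm₀, hfm₀, hsettled⟩ :=
    hg.exists_last_arrival hM hW (S := S) ⟨m₁, hm₁, μ m₁, hm₁⟩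
  have hmaps : Set.MapsTo (μ.trans g.symm : Equiv.Perm (Fin n)) S S := by
    intro m hm
    simpa [S] using hclosed m hm
  obtain ⟨m', hm', hμm'⟩ : ∃ m' ∈ S, μ m' = g m₀ :=
    ⟨μ.symm (g m₀), Equiv.Perm.perm_symm_mapsTo_of_mapsTo _ hmaps hm₀, by simp⟩
  have hne : m' ≠ m₀ := by
    rintro rfl
    exact (hM m').ne hm' hμm'
  have passed : p.1 m' (g m₀) (f m') := by
    rw [hsettled m' hm' hne, ← hμm']
    exact hm'
  obtain ⟨m, hfm, hmm'⟩ := hf m' (g m₀) passed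
  have not_gains : m ∉ S := by
    intro hm
    have heq : m ≠ m₀ := by
      rintro rfl
      exact hfm₀ hfm
    exact heq (g.injective ((hsettled m hm heq).symm.trans hfm))
  have hmμ : g m₀ ≠ μ m := by
    rw [← hμm']
    exact fun h => (hW _).ne hmm' (μ.injective h).symm
  refine ⟨m, g m₀, not_gains, (hM m).of_not_of_ne ?_ hmμ, ?_⟩
  · exact fun h => hfg m (hfm ▸ (hM m).trans_of_not_left not_gains h)
  · rwa [← hμm', Equiv.symm_apply_apply, hμm']

lemma IsMenOptimal.exists_blocks (hM : ∀ m, IsPref (p.1 m)) (hW : ∀ w, IsPref (p.2 w))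
    (hg : IsMenOptimal p g) (hne : ∃ m, p.1 m (μ m) (g m)) :
    ∃ m w, ¬ p.1 m (μ m) (g m) ∧ Blocks p μ m w := by
  by_cases hclosed :
      ∀ m, p.1 m (μ m) (g m) → p.1 (g.symm (μ m)) (μ (g.symm (μ m))) (μ m)
  · exact hg.exists_blocks_of_forall_gains hM hW hne hclosed
  · push Not at hclosed
    obtain ⟨m, hm, hm'⟩ := hclosed
    exact ⟨_, _, by simpa using hm', hg.1.blocks_of_gains hM hW hm hm'⟩

end MenOptimal

/-! ### Top dominance suffices -/

section TopDominance

variable {n : ℕ} {Dm Dw : Set (PrefRel n)} {p : Profile n}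

lemma InDomain.update_man (hp : InDomain Dm Dw p) (m : Fin n) {P : PrefRel n} (hP : P ∈ Dm) :
    InDomain Dm Dw (Function.update p.1 m P, p.2) :=
  ⟨(Function.forall_update_iff _ fun _ r => r ∈ Dm).2 ⟨hP, fun m' _ => hp.1 m'⟩, hp.2⟩

lemma InDomain.update_woman (hp : InDomain Dm Dw p) (w : Fin n) {Q : PrefRel n} (hQ : Q ∈ Dw) :
    InDomain Dm Dw (p.1, Function.update p.2 w Q) :=
  ⟨hp.1, (Function.forall_update_iff _ fun _ r => r ∈ Dw).2 ⟨hQ, fun w' _ => hp.2 w'⟩⟩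

lemma IsMenOptimal.not_man_gains (hM : ∀ m, IsPref (p.1 m)) (hW : ∀ w, IsPref (p.2 w))
    {g μ : Fin n ≃ Fin n} (hg : IsMenOptimal p g) {m : Fin n} {P : PrefRel n}
    (hμ : StableAt (Function.update p.1 m P, p.2) μ) : ¬ p.1 m (μ m) (g m) := by
  intro hm
  obtain ⟨m', w, hm', hblocks⟩ := hg.exists_blocks hM hW ⟨m, hm⟩
  have hne : m' ≠ m := by
    rintro rfl
    exact hm' hm
  exact hμ m' w (by simpa [Blocks, Function.update_of_ne hne] using hblocks)

/-- At a last state common to the profiles `p` and `(p.1, update p.2 w Q)`, an advance of `p` that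
is not an advance of the other profile exists because `w` alone ranks two proposers differently. -/
lemma IsMenOptimal.exists_disputed_proposers {w : Fin n} {Q : PrefRel n} {g g' : Fin n ≃ Fin n}
    (hM : ∀ m, IsPref (p.1 m)) (hW : ∀ w, IsPref (p.2 w)) (hQ : IsPref Q)
    (hg : IsMenOptimal p g) (hg' : IsMenOptimal (p.1, Function.update p.2 w Q) g')
    (hne : g ≠ g') :
    ∃ f, MenWeaklyPrefer p f g ∧ MenWeaklyPrefer p f g' ∧
      ∃ m₁ m₂, f m₁ = w ∧ f m₂ = w ∧ p.2 w m₁ m₂ ∧ Q m₂ m₁ := by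
  set p' : Profile n := (p.1, Function.update p.2 w Q) with hp'
  have hW' : ∀ v, IsPref (p'.2 v) :=
    (Function.forall_update_iff _ fun _ r => IsPref r).2 ⟨hQ, fun v _ => hW v⟩
  obtain ⟨f₀, hf₀, htop⟩ := exists_forall_isProposalState hM
  have hf₀' : IsProposalState p' f₀ := fun m v hv => (htop (fun _ => v) m hv).elim
  obtain ⟨f, ⟨hf, hf', hfg, hfg'⟩, hlast⟩ := exists_last_state hM
    (C := fun f => IsProposalState p f ∧ IsProposalState p' f ∧
      MenWeaklyPrefer p f g ∧ MenWeaklyPrefer p' f g')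
    ⟨f₀, hf₀, hf₀', htop g, htop g'⟩
  have hinj : ¬ Function.Injective f := fun hinj => hne <| Equiv.coe_fn_injective <|
    (hg.eq_of_injective hM hW hf hfg hinj).symm.trans
      (IsMenOptimal.eq_of_injective (p := p') hM hW' hg' hf' hfg' hinj)
  obtain ⟨f', hadv⟩ := hf.exists_advance hM hW hinj
  have hnot : ¬ Advance p' f f' := fun hadv' => hlast f' hadv
    ⟨hf.advance hM hW hadv, hf'.advance hM hW' hadv', hfg.advance hM hW hg.1 hadv,
      hfg'.advance hM hW' hg'.1 hadv'⟩
  obtain ⟨m₁, m₂, v, heq, hrej, hnext, rfl⟩ := hadv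
  have hrej' : ¬ p'.2 (f m₂) m₁ m₂ := fun h => hnot ⟨m₁, m₂, v, heq, h, hnext, rfl⟩
  obtain rfl : f m₂ = w := by
    by_contra hv
    exact hrej' (by simpa [hp', Function.update_of_ne hv] using hrej)
  refine ⟨f, hfg, hfg', m₁, m₂, heq, rfl, hrej, hQ.of_not_of_ne ?_ ((hW _).ne hrej).symm⟩
  simpa [hp'] using hrej'

lemma IsMenOptimal.not_woman_gains (hDw : ∀ P ∈ Dw, IsPref P) (hTD : TD Dw)
    (hM : ∀ m, IsPref (p.1 m)) (hW : ∀ w, p.2 w ∈ Dw) {w : Fin n} {Q : PrefRel n} (hQ : Q ∈ Dw)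
    {g g' : Fin n ≃ Fin n} (hg : IsMenOptimal p g)
    (hg' : IsMenOptimal (p.1, Function.update p.2 w Q) g') :
    ¬ p.2 w (g'.symm w) (g.symm w) := by
  intro hgain
  have hPref : ∀ v, IsPref (p.2 v) := fun v => hDw _ (hW v)
  have hPref' : ∀ v, IsPref (Function.update p.2 w Q v) :=
    (Function.forall_update_iff _ fun _ r => IsPref r).2 ⟨hDw Q hQ, fun v _ => hPref v⟩
  have hne : g ≠ g' := by
    rintro rfl
    exact (hPref w).irrefl _ hgain
  obtain ⟨f, hfg, hfg', m₁, m₂, hm₁, hm₂, htrue, hfalse⟩ :=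
    hg.exists_disputed_proposers hM hPref (hDw Q hQ) hg' hne
  have below_g : ¬ p.2 w m₁ (g.symm w) :=
    hm₁ ▸ hg.1.not_prefers_proposer hM hPref hfg m₁
  have below_g' : ¬ Q m₂ (g'.symm w) := by
    simpa [hm₂] using StableAt.not_prefers_proposer (p := (p.1, Function.update p.2 w Q))
      hM hPref' hg'.1 hfg' m₂
  have above_m₁ : p.2 w (g'.symm w) m₁ := (hPref w).trans_of_not_right hgain below_g
  have above_m₂ : Q (g'.symm w) m₂ := (hDw Q hQ).of_not_of_ne below_g'
    ((hPref w).ne ((hPref w).trans above_m₁ htrue))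
  exact hTD _ _ _ ⟨p.2 w, hW w, above_m₁, htrue⟩ ⟨Q, hQ, above_m₂, hfalse⟩

theorem exists_stableRule_sp_of_td_women (hDm : ∀ P ∈ Dm, IsPref P) (hDw : ∀ P ∈ Dw, IsPref P)
    (hTD : TD Dw) : ∃ φ : Profile n → (Fin n ≃ Fin n), StableRule Dm Dw φ ∧ SP Dm Dw φ := by
  have hM : ∀ {p}, InDomain Dm Dw p → ∀ m, IsPref (p.1 m) := fun hp m => hDm _ (hp.1 m)
  have hW : ∀ {p}, InDomain Dm Dw p → ∀ w, IsPref (p.2 w) := fun hp w => hDw _ (hp.2 w)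
  have hopt : ∀ p, InDomain Dm Dw p → ∃ g, IsMenOptimal p g := fun p hp =>
    exists_isMenOptimal (hM hp) (hW hp)
  choose! φ hφ using hopt
  refine ⟨φ, fun p hp => (hφ p hp).1, fun p hp => ⟨fun m P hP => ?_, fun w Q hQ => ?_⟩⟩
  · exact (hφ p hp).not_man_gains (hM hp) (hW hp) (hφ _ (hp.update_man m hP)).1
  · exact (hφ p hp).not_woman_gains hDw hTD (hM hp) hp.2 hQ (hφ _ (hp.update_woman w hQ))

theorem exists_stableRule_sp_of_td_men (hDm : ∀ P ∈ Dm, IsPref P) (hDw : ∀ P ∈ Dw, IsPref P)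
    (hTD : TD Dm) : ∃ φ : Profile n → (Fin n ≃ Fin n), StableRule Dm Dw φ ∧ SP Dm Dw φ := by
  obtain ⟨φ, hstable, hsp⟩ := exists_stableRule_sp_of_td_women hDw hDm hTD
  exact ⟨fun p => (φ p.swap).symm,
    fun p hp m w hblocks => hstable p.swap hp.symm w m hblocks.symm,
    fun p hp => (hsp p.swap hp.symm).symm⟩

end TopDominance

/-! ### Medians of trees -/

section Tree

variable {X : Type*} {G : SimpleGraph X} {a b x y z t : X}

lemma onPath_iff_forall_walk : OnPath G a x y ↔ ∀ p : G.Walk x y, a ∈ p.support := by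
  classical
  exact ⟨fun h p => p.support_bypass_subset_support (h p.bypass p.bypass_isPath), fun h p _ => h p⟩

lemma onPath_start : OnPath G x x y := fun p _ => p.start_mem_support

namespace OnPath

lemma symm (h : OnPath G a x y) : OnPath G a y x := fun p hp => by
  simpa using h p.reverse hp.reverse

lemma split (h : OnPath G a x y) (t : X) : OnPath G a t x ∨ OnPath G a t y := by
  simp only [onPath_iff_forall_walk] at h ⊢
  by_contra! ⟨⟨p, hp⟩, q, hq⟩
  have := h (p.reverse.append q)
  rw [SimpleGraph.Walk.mem_support_append_iff, SimpleGraph.Walk.support_reverse,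
    List.mem_reverse] at this
  exact this.elim hp hq

lemma trans (hb : OnPath G b x a) (ha : OnPath G a x y) : OnPath G b x y := by
  classical
  rw [onPath_iff_forall_walk] at *
  intro p
  exact p.support_takeUntil_subset_support (ha p) (hb _)

lemma of_adj (hadj : G.Adj x y) (h : OnPath G a y z) (hne : a ≠ y) : OnPath G a x z := by
  rw [onPath_iff_forall_walk] at *
  intro p
  have := h (.cons hadj.symm p)
  simpa [hne] using this

end OnPath

lemma onPath_or_onPath_of_adj (hG : G.IsAcyclic) (hadj : G.Adj x y) (z : X) :
    OnPath G y x z ∨ OnPath G x y z := by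
  simp only [onPath_iff_forall_walk]
  by_contra! ⟨⟨p, hp⟩, q, hq⟩
  have bridge := SimpleGraph.isBridge_iff_forall_walk_mem_edges.1
    (SimpleGraph.isAcyclic_iff_forall_adj_isBridge.1 hG hadj) (p.append q.reverse)
  rw [SimpleGraph.Walk.edges_append, List.mem_append] at bridge
  rcases bridge with h | h
  · exact hp (p.snd_mem_support_of_mem_edges h)
  · exact hq (by simpa using q.reverse.fst_mem_support_of_mem_edges h)

lemma exists_median (hG : G.IsTree) (x y z : X) :
    ∃ v, OnPath G v x y ∧ OnPath G v x z ∧ OnPath G v y z := by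
  obtain ⟨p⟩ := hG.1.preconnected x y
  induction p with
  | nil => exact ⟨_, onPath_start, onPath_start, onPath_start⟩
  | @cons x x' y hadj p ih =>
    obtain ⟨v, hxy, hxz, hyz⟩ := ih
    rcases eq_or_ne v x' with rfl | hne
    · rcases onPath_or_onPath_of_adj hG.2 hadj y with hvy | hxvy
      · rcases onPath_or_onPath_of_adj hG.2 hadj z with hvz | hxvz
        · exact ⟨v, hvy, hvz, hyz⟩
        · exact ⟨x, onPath_start, onPath_start, (hxvz.symm.trans hyz.symm).symm⟩
      · exact ⟨x, onPath_start, onPath_start, hxvy.symm.trans hyz⟩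
    · exact ⟨v, hxy.of_adj hadj hne, hxz.of_adj hadj hne, hyz⟩

lemma SPTree.eq_or_of_onPath [Finite X] {r : X → X → Prop} (hr : IsPref r) (hsp : SPTree G r)
    (ha : OnPath G a x y) (hxy : r x y) : a = y ∨ r a y := by
  have : Nonempty X := ⟨x⟩
  obtain ⟨t, ht⟩ := hr.exists_topOf
  rcases ha.split t with hax | hay
  · rcases hsp t a x ht hax with rfl | h
    · exact .inr hxy
    · exact .inr (hr.trans h hxy)
  · exact hsp t a y ht hay

end Tree

/-! ### Pivots -/

/-- The relation on `Fin k` comparing elements by the position that `s` gives them. -/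
def rankOrder {k : ℕ} (s : Fin k → Fin k) : PrefRel k := fun i j => s i < s j

/-- The preferences over `k` relabelled alternatives induced by a preference domain. -/
def restrictDomain {X : Type*} {k : ℕ} (v : Fin k ↪ X) (D : Set (X → X → Prop)) :
    Set (PrefRel k) :=
  (v ⁻¹'o ·) '' D

/-- Three orders of the alternatives `0, 1, 2` that violate top dominance: `0 1 2`, `0 2 1` and
`1 0 2`. -/
def pivotOrders : Set (PrefRel 3) :=
  {rankOrder ![0, 1, 2], rankOrder ![0, 2, 1], rankOrder ![1, 0, 2]}

section Pivot

variable {X : Type*} {r : X → X → Prop} {D : Set (X → X → Prop)}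

lemma IsPref.preimage_eq_rankOrder {k : ℕ} (hr : IsPref r) {v : Fin k → X} {s : Fin k → Fin k}
    (hs : Function.Injective s) (h : ∀ i j, s i < s j → r (v i) (v j)) :
    v ⁻¹'o r = rankOrder s := by
  ext i j
  refine ⟨fun hij => ?_, h i j⟩
  by_contra hlt
  rcases (not_lt.1 hlt).eq_or_lt with heq | hji
  · rw [hs heq] at hij
    exact hr.irrefl _ hij
  · exact hr.asymm hij (h j i hji)

lemma pivotOrders_subset_restrictDomain (hD : ∀ P ∈ D, IsPref P) {x y z : X}
    (hxyz : ∃ P ∈ D, P x y ∧ P y z) (hxzy : ∃ P ∈ D, P x z ∧ P z y)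
    (hyxz : ∃ P ∈ D, P y x ∧ P x z) :
    ∃ v : Fin 3 ↪ X, pivotOrders ⊆ restrictDomain v D := by
  obtain ⟨P₁, hP₁, h₁xy, h₁yz⟩ := hxyz
  obtain ⟨P₂, hP₂, h₂xz, h₂zy⟩ := hxzy
  obtain ⟨P₃, hP₃, h₃yx, h₃xz⟩ := hyxz
  have h₁xz := (hD P₁ hP₁).trans h₁xy h₁yz
  have h₂xy := (hD P₂ hP₂).trans h₂xz h₂zy
  have h₃yz := (hD P₃ hP₃).trans h₃yx h₃xz
  have hinj : Function.Injective ![x, y, z] := by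
    have := (hD P₁ hP₁).ne h₁xy
    have := (hD P₁ hP₁).ne h₁xz
    have := (hD P₁ hP₁).ne h₁yz
    intro i j
    fin_cases i <;> fin_cases j <;> simp_all [eq_comm]
  refine ⟨⟨![x, y, z], hinj⟩, ?_⟩
  rintro _ (rfl | rfl | rfl)
  · refine ⟨P₁, hP₁, (hD P₁ hP₁).preimage_eq_rankOrder (by decide) ?_⟩
    simp [Fin.forall_fin_succ, *]
  · refine ⟨P₂, hP₂, (hD P₂ hP₂).preimage_eq_rankOrder (by decide) ?_⟩
    simp [Fin.forall_fin_succ, *]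
  · refine ⟨P₃, hP₃, (hD P₃ hP₃).preimage_eq_rankOrder (by decide) ?_⟩
    simp [Fin.forall_fin_succ, *]

lemma exists_pivotOrders_subset [Finite X] (hD : ∀ P ∈ D, IsPref P) (hrich : Rich D)
    {G : SimpleGraph X} (hG : G.IsTree) (hsp : ∀ P ∈ D, SPTree G P) (hTD : ¬ TD D) :
    ∃ v : Fin 3 ↪ X, pivotOrders ⊆ restrictDomain v D := by
  simp only [TD, not_forall, not_not] at hTD
  obtain ⟨x, y, z, ⟨P₁, hP₁, h₁xy, h₁yz⟩, P₂, hP₂, h₂xz, h₂zy⟩ := hTD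
  obtain ⟨v, hvxy, hvxz, hvyz⟩ := exists_median hG x y z
  have h₁v : v = y ∨ P₁ v y := (hsp P₁ hP₁).eq_or_of_onPath (hD P₁ hP₁) hvxy h₁xy
  have h₂v : v = z ∨ P₂ v z := (hsp P₂ hP₂).eq_or_of_onPath (hD P₂ hP₂) hvxz h₂xz
  have hvz : v ≠ z := by
    rintro rfl
    exact h₁v.elim ((hD P₁ hP₁).ne h₁yz).symm ((hD P₁ hP₁).asymm h₁yz)
  have hvy : v ≠ y := by
    rintro rfl
    exact h₂v.elim ((hD P₂ hP₂).ne h₂zy).symm ((hD P₂ hP₂).asymm h₂zy)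
  obtain ⟨P₃, hP₃, htop⟩ := hrich y
  have h₃v : P₃ v z := ((hsp P₃ hP₃) y v z htop hvyz).resolve_left hvz
  exact pivotOrders_subset_restrictDomain hD ⟨P₁, hP₁, h₁v.resolve_left hvy, h₁yz⟩
    ⟨P₂, hP₂, h₂v.resolve_left hvz, h₂zy⟩ ⟨P₃, hP₃, htop v hvy, h₃v⟩

end Pivot

/-! ### Submarkets -/

section Submarket

variable {n k : ℕ} {Dm Dw : Set (PrefRel n)} {u v : Fin k ↪ Fin n} {p : Profile n}
  {μ : Fin n ≃ Fin n} {q : Profile k} {ν : Fin k ≃ Fin k}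

lemma StableAt.apply_eq_of_topOf (hμ : StableAt p μ) {m w : Fin n} (hm : TopOf (p.1 m) w)
    (hw : TopOf (p.2 w) m) : μ m = w := by
  by_contra hne
  exact hμ m w ⟨hm _ hne, hw _ fun h => hne ((Equiv.symm_apply_eq _).1 h).symm⟩

lemma exists_restrict_of_eqOn_compl {X Y : Type*} [Finite Y] {u v : Y ↪ X} {σ μ : Equiv.Perm X}
    (hσ : ∀ i, σ (u i) = v i) (hμ : Set.EqOn μ σ (Set.range u)ᶜ) :
    ∃ ν : Equiv.Perm Y, ∀ i, μ (u i) = v (ν i) := by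
  have image_eq : μ '' Set.range u = Set.range v := by
    have := hμ.image_eq
    rw [Set.image_compl_eq μ.bijective, Set.image_compl_eq σ.bijective, compl_inj_iff] at this
    rw [this, ← Set.range_comp]
    exact congrArg Set.range (funext hσ)
  have hmem : ∀ i, ∃ j, v j = μ (u i) := fun i =>
    image_eq.subset (Set.mem_image_of_mem μ (Set.mem_range_self i))
  choose ν hν using hmem
  have hinj : Function.Injective ν := fun i j hij =>
    u.injective (μ.injective (by rw [← hν, ← hν, hij]))
  lift ν to Equiv.Perm Y using hinj.bijective_of_finite
  exact ⟨ν, fun i => (hν i).symm⟩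

lemma symm_apply_eq_of_apply_eq {X Y : Type*} {u v : Y → X} {μ : Equiv.Perm X}
    {ν : Equiv.Perm Y} (h : ∀ i, μ (u i) = v (ν i)) (j : Y) : μ.symm (v j) = u (ν.symm j) := by
  rw [Equiv.symm_apply_eq, h, Equiv.apply_symm_apply]

lemma StableAt.restrict (hμ : StableAt p μ) (hm : ∀ i a b, p.1 (u i) (v a) (v b) ↔ q.1 i a b)
    (hw : ∀ j a b, p.2 (v j) (u a) (u b) ↔ q.2 j a b) (hν : ∀ i, μ (u i) = v (ν i)) :
    StableAt q ν := by
  intro i j hblocks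
  apply hμ (u i) (v j)
  rwa [Blocks, hν, symm_apply_eq_of_apply_eq hν, hm, hw]

lemma extend_update {X Y Z : Type*} [DecidableEq X] [DecidableEq Y] {u : Y → X}
    (hu : Function.Injective u) (f : Y → Z) (g : X → Z) (i : Y) (c : Z) :
    Function.extend u (Function.update f i c) g =
      Function.update (Function.extend u f g) (u i) c := by
  ext x
  by_cases hx : ∃ j, u j = x
  · obtain ⟨j, rfl⟩ := hx
    simp only [Function.update_apply, hu.extend_apply, hu.eq_iff]
  · have hxi : x ≠ u i := fun h => hx ⟨i, h.symm⟩
    rw [Function.extend_apply' _ _ _ hx, Function.update_of_ne hxi, Function.extend_apply' _ _ _ hx]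

lemma forall_extend {X Y Z : Type*} {u : Y → X} {f : Y → Z} {g : X → Z} {P : Z → Prop}
    (hf : ∀ i, P (f i)) (hg : ∀ x, P (g x)) (x : X) : P (Function.extend u f g x) := by
  classical
  rw [Function.extend_def]
  split_ifs
  exacts [hf _, hg x]

/-- The profile in which the agents of the submarket given by `u` and `v` report the images of
their preferences under `L` and `L'`, and the other agents report as in `p`. -/
noncomputable def embedProfile (u v : Fin k ↪ Fin n) (L L' : PrefRel k → PrefRel n)
    (p : Profile n) (q : Profile k) : Profile n :=
  (Function.extend u (L ∘ q.1) p.1, Function.extend v (L' ∘ q.2) p.2)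

lemma embedProfile_update_man (L L' : PrefRel k → PrefRel n) (i : Fin k) (r : PrefRel k) :
    embedProfile u v L L' p (Function.update q.1 i r, q.2) =
      (Function.update (embedProfile u v L L' p q).1 (u i) (L r),
        (embedProfile u v L L' p q).2) := by
  simp only [embedProfile, Function.comp_update, extend_update u.injective]

lemma embedProfile_update_woman (L L' : PrefRel k → PrefRel n) (j : Fin k) (r : PrefRel k) :
    embedProfile u v L L' p (q.1, Function.update q.2 j r) =
      ((embedProfile u v L L' p q).1,
        Function.update (embedProfile u v L L' p q).2 (v j) (L' r)) := by
  simp only [embedProfile, Function.comp_update, extend_update v.injective]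

lemma inDomain_embedProfile {L L' : PrefRel k → PrefRel n} (hp : InDomain Dm Dw p)
    (hm : ∀ i, L (q.1 i) ∈ Dm) (hw : ∀ j, L' (q.2 j) ∈ Dw) :
    InDomain Dm Dw (embedProfile u v L L' p q) :=
  ⟨forall_extend (P := (· ∈ Dm)) hm hp.1, forall_extend (P := (· ∈ Dw)) hw hp.2⟩

lemma exists_lift_of_mem_restrictDomain (D : Set (PrefRel n)) (v : Fin k ↪ Fin n) :
    ∃ L : PrefRel k → PrefRel n, ∀ r ∈ restrictDomain v D,
      L r ∈ D ∧ ∀ a b, L r (v a) (v b) ↔ r a b := by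
  have h : ∀ r ∈ restrictDomain v D, ∃ P ∈ D, ∀ a b, P (v a) (v b) ↔ r a b := by
    rintro _ ⟨P, hP, rfl⟩
    exact ⟨P, hP, fun _ _ => Iff.rfl⟩
  choose! L hL using h
  exact ⟨L, hL⟩

lemma exists_inDomain_topOf (hrm : Rich Dm) (hrw : Rich Dw) (σ : Equiv.Perm (Fin n)) :
    ∃ p, InDomain Dm Dw p ∧ (∀ m, TopOf (p.1 m) (σ m)) ∧ ∀ w, TopOf (p.2 w) (σ.symm w) := by
  choose P hP hPtop using hrm
  choose Q hQ hQtop using hrw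
  exact ⟨(fun m => P (σ m), fun w => Q (σ.symm w)), ⟨fun _ => hP _, fun _ => hQ _⟩,
    fun _ => hPtop _, fun _ => hQtop _⟩

lemma StableAt.exists_restrict_embedProfile {L L' : PrefRel k → PrefRel n} {σ : Equiv.Perm (Fin n)}
    (hσ : ∀ i, σ (u i) = v i) (hm : ∀ m, TopOf (p.1 m) (σ m))
    (hw : ∀ w, TopOf (p.2 w) (σ.symm w)) (hμ : StableAt (embedProfile u v L L' p q) μ) :
    ∃ ν : Fin k ≃ Fin k, ∀ i, μ (u i) = v (ν i) := by
  refine exists_restrict_of_eqOn_compl hσ fun m hmu => hμ.apply_eq_of_topOf ?_ ?_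
  · simpa only [embedProfile, Function.extend_apply' _ _ _ hmu] using hm m
  · have hσm : ¬ ∃ j, v j = σ m := by
      rintro ⟨j, hj⟩
      exact hmu ⟨j, σ.injective ((hσ j).trans hj)⟩
    simpa only [embedProfile, Function.extend_apply' _ _ _ hσm, σ.symm_apply_apply] using hw (σ m)

lemma exists_stableRule_sp_restrictDomain (hrm : Rich Dm) (hrw : Rich Dw) (u v : Fin k ↪ Fin n)
    {φ : Profile n → (Fin n ≃ Fin n)} (hstable : StableRule Dm Dw φ) (hsp : SP Dm Dw φ) :
    ∃ ψ : Profile k → (Fin k ≃ Fin k),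
      StableRule (restrictDomain v Dm) (restrictDomain u Dw) ψ ∧
        SP (restrictDomain v Dm) (restrictDomain u Dw) ψ := by
  obtain ⟨σ, hσ⟩ := Equiv.Perm.exists_extending_pair u v u.injective v.injective
  obtain ⟨p, hp, hpm, hpw⟩ := exists_inDomain_topOf hrm hrw σ
  obtain ⟨L, hL⟩ := exists_lift_of_mem_restrictDomain Dm v
  obtain ⟨L', hL'⟩ := exists_lift_of_mem_restrictDomain Dw u
  set E := embedProfile u v L L' p with hE
  have hdom : ∀ q, InDomain (restrictDomain v Dm) (restrictDomain u Dw) q → InDomain Dm Dw (E q) :=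
    fun q hq => inDomain_embedProfile hp (fun i => (hL _ (hq.1 i)).1) fun j => (hL' _ (hq.2 j)).1
  have men : ∀ q, InDomain (restrictDomain v Dm) (restrictDomain u Dw) q →
      ∀ i a b, (E q).1 (u i) (v a) (v b) ↔ q.1 i a b := fun q hq i => by
    simpa only [hE, embedProfile, u.injective.extend_apply, Function.comp_apply] using
      (hL _ (hq.1 i)).2
  have women : ∀ q, InDomain (restrictDomain v Dm) (restrictDomain u Dw) q →
      ∀ j a b, (E q).2 (v j) (u a) (u b) ↔ q.2 j a b := fun q hq j => by
    simpa only [hE, embedProfile, v.injective.extend_apply, Function.comp_apply] using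
      (hL' _ (hq.2 j)).2
  have hmatch : ∀ q, InDomain (restrictDomain v Dm) (restrictDomain u Dw) q →
      ∃ ν : Fin k ≃ Fin k, ∀ i, φ (E q) (u i) = v (ν i) := fun q hq =>
    (hstable _ (hdom q hq)).exists_restrict_embedProfile hσ hpm hpw
  choose! ψ hψ using hmatch
  refine ⟨ψ, fun q hq => (hstable _ (hdom q hq)).restrict (men q hq) (women q hq) (hψ q hq),
    fun q hq => ⟨fun i r hr => ?_, fun j r hr => ?_⟩⟩
  · have := (hsp _ (hdom q hq)).1 (u i) (L r) (hL r hr).1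
    rwa [hE, ← embedProfile_update_man, ← hE, hψ _ (hq.update_man i hr), hψ q hq,
      men q hq] at this
  · have := (hsp _ (hdom q hq)).2 (v j) (L' r) (hL' r hr).1
    rwa [hE, ← embedProfile_update_woman, ← hE,
      symm_apply_eq_of_apply_eq (hψ _ (hq.update_woman j hr)),
      symm_apply_eq_of_apply_eq (hψ q hq), women q hq] at this

end Submarket

/-! ### The three-by-three market -/

section PivotMarket

/-- The profile in which man `i` ranks woman `j` at position `A i j` and woman `j` ranks man `i` at
position `B j i`; it makes stability in a small market decidable. -/
def rankProfile {k : ℕ} (A B : Fin k → Fin k → Fin k) : Profile k :=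
  (rankOrder ∘ A, rankOrder ∘ B)

instance {k : ℕ} (A B : Fin k → Fin k → Fin k) (ν : Fin k ≃ Fin k) :
    Decidable (StableAt (rankProfile A B) ν) :=
  inferInstanceAs (Decidable (∀ i j, ¬ (A i j < A i (ν i) ∧ B j i < B j (ν.symm j))))

lemma rankProfile_update_man {k : ℕ} (A B : Fin k → Fin k → Fin k) (i : Fin k)
    (s : Fin k → Fin k) :
    rankProfile (Function.update A i s) B =
      (Function.update (rankProfile A B).1 i (rankOrder s), (rankProfile A B).2) :=
  Prod.ext (Function.comp_update rankOrder A i s) rfl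

lemma rankProfile_update_woman {k : ℕ} (A B : Fin k → Fin k → Fin k) (j : Fin k)
    (s : Fin k → Fin k) :
    rankProfile A (Function.update B j s) =
      ((rankProfile A B).1, Function.update (rankProfile A B).2 j (rankOrder s)) :=
  Prod.ext rfl (Function.comp_update rankOrder B j s)

/-- The men's positions of the women in the manipulable market. -/
def pivotMen : Fin 3 → Fin 3 → Fin 3 := ![![0, 1, 2], ![1, 0, 2], ![0, 1, 2]]

/-- The women's positions of the men in the manipulable market: women `0` and `1` have the opposite
interests of men `0` and `1`, so these four can be matched stably in two ways. -/
def pivotWomen : Fin 3 → Fin 3 → Fin 3 := ![![1, 0, 2], ![0, 1, 2], ![0, 1, 2]]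

lemma StableAt.apply_eq_one_or_symm_apply_eq_one_of_pivot {ν : Fin 3 ≃ Fin 3}
    (hν : StableAt (rankProfile pivotMen pivotWomen) ν) : ν 0 = 1 ∨ ν.symm 1 = 1 := by
  revert ν
  decide

lemma StableAt.apply_eq_zero_of_pivot_update_man {ν : Fin 3 ≃ Fin 3}
    (hν : StableAt (rankProfile (Function.update pivotMen 0 ![0, 2, 1]) pivotWomen) ν) :
    ν 0 = 0 := by
  revert ν
  decide

lemma StableAt.symm_apply_eq_zero_of_pivot_update_woman {ν : Fin 3 ≃ Fin 3}
    (hν : StableAt (rankProfile pivotMen (Function.update pivotWomen 1 ![0, 2, 1])) ν) :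
    ν.symm 1 = 0 := by
  revert ν
  decide

theorem not_sp_of_pivotOrders_subset {Em Ew : Set (PrefRel 3)} (hEm : pivotOrders ⊆ Em)
    (hEw : pivotOrders ⊆ Ew) {φ : Profile 3 → (Fin 3 ≃ Fin 3)} (hstable : StableRule Em Ew φ) :
    ¬ SP Em Ew φ := by
  intro hsp
  have hdom : InDomain Em Ew (rankProfile pivotMen pivotWomen) :=
    ⟨fun i => hEm (by fin_cases i <;> simp [pivotOrders, rankProfile, pivotMen]),
      fun j => hEw (by fin_cases j <;> simp [pivotOrders, rankProfile, pivotWomen])⟩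
  have hmisreport : rankOrder ![0, 2, 1] ∈ pivotOrders := by simp [pivotOrders]
  rcases (hstable _ hdom).apply_eq_one_or_symm_apply_eq_one_of_pivot with hman | hwoman
  · have hfirst := hstable _ (hdom.update_man 0 (hEm hmisreport))
    have hno := (hsp _ hdom).1 0 _ (hEm hmisreport)
    rw [← rankProfile_update_man] at hfirst hno
    rw [hfirst.apply_eq_zero_of_pivot_update_man, hman] at hno
    exact hno Fin.zero_lt_one
  · have hfirst := hstable _ (hdom.update_woman 1 (hEw hmisreport))
    have hno := (hsp _ hdom).2 1 _ (hEw hmisreport)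
    rw [← rankProfile_update_woman] at hfirst hno
    rw [hfirst.symm_apply_eq_zero_of_pivot_update_woman, hwoman] at hno
    exact hno Fin.zero_lt_one

end PivotMarket

/-- on a rich anonymous tree-single-peaked domain, a stable and
strategy-proof matching rule exists iff `Dm` or `Dw` satisfies top dominance. -/
theorem stmt12 {n : ℕ} (hn : 3 ≤ n) (Dm Dw : Set (PrefRel n))
    (hDm : ∀ P ∈ Dm, IsPref P) (hDw : ∀ P ∈ Dw, IsPref P)
    (hrm : Rich Dm) (hrw : Rich Dw)
    (Gw : SimpleGraph (Fin n)) (hGw : Gw.IsTree) (hspm : ∀ P ∈ Dm, SPTree Gw P)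
    (Gm : SimpleGraph (Fin n)) (hGm : Gm.IsTree) (hspw : ∀ P ∈ Dw, SPTree Gm P) :
    (∃ φ : Profile n → (Fin n ≃ Fin n), StableRule Dm Dw φ ∧ SP Dm Dw φ) ↔
      (TD Dm ∨ TD Dw) := by
  constructor
  · rintro ⟨φ, hstable, hsp⟩
    by_contra! ⟨hTDm, hTDw⟩
    obtain ⟨v, hv⟩ := exists_pivotOrders_subset hDm hrm hGw hspm hTDm
    obtain ⟨u, hu⟩ := exists_pivotOrders_subset hDw hrw hGm hspw hTDw
    obtain ⟨ψ, hψstable, hψsp⟩ := exists_stableRule_sp_restrictDomain hrm hrw u v hstable hsp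
    exact not_sp_of_pivotOrders_subset hv hu hψstable hψsp
  · rintro (hTD | hTD)
    · exact exists_stableRule_sp_of_td_men hDm hDw hTD
    · exact exists_stableRule_sp_of_td_women hDm hDw hTD
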